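/- HGNOs approximately solve the PDE uniformly on compacts (Theorem DGM_residual(i)): assume F : H × ℝ × H × L(H) → ℝ satisfies the Lipschitz-type estimate and the sequential continuity assumption, and let v be a classical solution of the PDE ⟨L Dv(x), x⟩ + F(x, v(x), Dv(x), D²v(x)) = 0 on H. Let K, K' ⊆ H be compact and assume the consistency condition sup_{x∈K} |⟨L(Dv(x) − P_d Dv(P_d x)), x⟩| → 0 as d → ∞. Then for every ε > 0 there exist d ∈ ℕ and f ∈ 𝒩_d such that the cylindrical function w_f satisfies sup_{x∈K} |v − w_f| < ε, sup_{x∈K} ‖Dv − Dw_f‖ < ε, sup_{x∈K,h∈K'} ‖(D²v(x) − D²w_f(x)) h‖ < ε, sup_{x∈K} |⟨L(Dv(x) − Dw_f(x)), x⟩| < ε, and the PDE residual bound sup_{x∈K} |⟨L Dw_f(x), x⟩ + F(x, w_f(x), Dw_f(x), D²w_f(x))| < ε. -/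

import Mathlib

open Filter Topology
open scoped RealInnerProductSpace

/-- The coordinate map `x ↦ (⟪e 0, x⟫, …, ⟪e (d-1), x⟫)` of a Hilbert space with respect to the
first `d` elements of a sequence `e`. -/
noncomputable def euclCoord {H : Type*} [NormedAddCommGroup H] [InnerProductSpace ℝ H]
    (e : ℕ → H) (d : ℕ) (x : H) : EuclideanSpace ℝ (Fin d) :=
  WithLp.toLp 2 fun i : Fin d => ⟪e i, x⟫

/-- The cylindrical function (Hilbert–Galerkin Neural Operator) with inner network `f`. -/
noncomputable def cyl {H : Type*} [NormedAddCommGroup H] [InnerProductSpace ℝ H]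
    (e : ℕ → H) {d : ℕ} (f : EuclideanSpace ℝ (Fin d) → ℝ) (x : H) : ℝ :=
  f (euclCoord e d x)

/-!
Let `P_d` be the Galerkin projection onto the span of the first `d` basis vectors. The functions
`v ∘ P_d` are cylindrical, and since `P_d → id` strongly with `‖P_d‖ ≤ 1`, they converge to `v`
together with their gradients `P_d Dv(P_d x)` and their Hessians `P_d D²v(P_d x) P_d`, the latter
in the strong operator topology only. For fixed `d` the operator `L` is bounded on the range of
`P_d`, so a network `f ∈ N d` that is close enough to the inner function of `v ∘ P_d` in `C²`
changes all these quantities, including `L D(v ∘ P_d)`, by an arbitrarily small amount. The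
consistency condition controls the remaining error in the unbounded term, and strong sequential
continuity of `F` turns strong convergence of the Hessians into convergence of the nonlinearity.
-/

section UniformConvergence

lemma tendsto_prod_nhdsWithin_of_tendstoUniformlyOn {ι X β : Type*} [TopologicalSpace X]
    [UniformSpace β] {l : Filter ι} {w : ι → X → β} {f : X → β} {s : Set X} {x : X}
    (hw : TendstoUniformlyOn w f l s) (hf : ContinuousWithinAt f s x) :
    Tendsto (fun p : ι × X => w p.1 p.2) (l ×ˢ 𝓝[s] x) (𝓝 (f x)) :=
  have hw' : TendstoUniformlyOn (fun p : ι × X => w p.1) f (l ×ˢ 𝓝[s] x) s :=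
    fun U hU => tendsto_fst.eventually (hw U hU)
  hw'.tendsto_comp hf tendsto_snd

lemma tendstoUniformlyOn_of_tendsto_prod_nhdsWithin {ι X β : Type*} [TopologicalSpace X]
    [UniformSpace β] {l : Filter ι} {w : ι → X → β} {f : X → β} {K : Set X} (hK : IsCompact K)
    (hf : ContinuousOn f K)
    (hw : ∀ x ∈ K, Tendsto (fun p : ι × X => w p.1 p.2) (l ×ˢ 𝓝[K] x) (𝓝 (f x))) :
    TendstoUniformlyOn w f l K := by
  rw [← tendstoLocallyUniformlyOn_iff_tendstoUniformlyOn_of_compact hK,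
    tendstoLocallyUniformlyOn_iff_forall_tendsto]
  exact fun x hx => (((hf x hx).tendsto.comp tendsto_snd).prodMk_nhds (hw x hx)).mono_right
    (nhds_le_uniformity (f x))

lemma tendstoUniformlyOn_of_dist_le {ι X β : Type*} [PseudoMetricSpace β] {l : Filter ι}
    {u w : ι → X → β} {f : X → β} {s : Set X} {b : ι → ℝ} (hu : TendstoUniformlyOn u f l s)
    (hb : Tendsto b l (𝓝 0)) (h : ∀ i, ∀ x ∈ s, dist (u i x) (w i x) ≤ b i) :
    TendstoUniformlyOn w f l s := by
  rw [Metric.tendstoUniformlyOn_iff] at hu ⊢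
  intro ε hε
  filter_upwards [hu (ε / 2) (half_pos hε), hb.eventually_lt_const (half_pos hε)]
    with i hui hbi x hx
  calc dist (f x) (w i x) ≤ dist (f x) (u i x) + dist (u i x) (w i x) := dist_triangle _ _ _
    _ < ε / 2 + ε / 2 := add_lt_add (hui x hx) ((h i x hx).trans_lt hbi)
    _ = ε := add_halves ε

lemma tendsto_clm_apply_of_norm_le {𝕜 ι E G : Type*} [NontriviallyNormedField 𝕜]
    [SeminormedAddCommGroup E] [NormedSpace 𝕜 E] [SeminormedAddCommGroup G] [NormedSpace 𝕜 G]
    {l : Filter ι} {T : ι → E →L[𝕜] G} {C : ℝ} {u : ι → E} {x : E} {y : G}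
    (hC : ∀ i, ‖T i‖ ≤ C) (hT : Tendsto (fun i => T i x) l (𝓝 y)) (hu : Tendsto u l (𝓝 x)) :
    Tendsto (fun i => T i (u i)) l (𝓝 y) := by
  have hdiff : Tendsto (fun i => T i (u i - x)) l (𝓝 0) := by
    refine squeeze_zero_norm (fun i => (T i).le_of_opNorm_le (hC i) (u i - x)) ?_
    simpa using ((hu.sub_const x).norm).const_mul C
  simpa using hdiff.add hT

end UniformConvergence

section Gradient

lemma gradient_comp_clm {𝕜 E G : Type*} [RCLike 𝕜] [NormedAddCommGroup E]
    [InnerProductSpace 𝕜 E] [CompleteSpace E] [NormedAddCommGroup G] [InnerProductSpace 𝕜 G]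
    [CompleteSpace G] (A : E →L[𝕜] G) {f : G → 𝕜} {x : E} (hf : DifferentiableAt 𝕜 f (A x)) :
    gradient (fun z => f (A z)) x = A.adjoint (gradient f (A x)) := by
  refine HasGradientAt.gradient (hasGradientAt_iff_hasFDerivAt.2 ?_)
  refine (hf.hasGradientAt.hasFDerivAt.comp x A.hasFDerivAt).congr_fderiv ?_
  ext z
  simp [ContinuousLinearMap.adjoint_inner_left]

variable {E G : Type*} [NormedAddCommGroup E] [InnerProductSpace ℝ E] [CompleteSpace E]
  [NormedAddCommGroup G] [InnerProductSpace ℝ G] [CompleteSpace G]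

lemma contDiff_gradient {m n : WithTop ℕ∞} {f : E → ℝ} (hf : ContDiff ℝ n f) (hmn : m + 1 ≤ n) :
    ContDiff ℝ m (gradient f) :=
  (InnerProductSpace.toDual ℝ E).symm.toContinuousLinearEquiv.contDiff.comp
    (hf.fderiv_right hmn)

lemma fderiv_gradient_comp_clm (A : E →L[ℝ] G) {f : G → ℝ} (hf : Differentiable ℝ f) {x : E}
    (hf' : DifferentiableAt ℝ (gradient f) (A x)) :
    fderiv ℝ (gradient fun z => f (A z)) x =
      A.adjoint ∘L fderiv ℝ (gradient f) (A x) ∘L A := by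
  have hgrad : (gradient fun z => f (A z)) = fun z => A.adjoint (gradient f (A z)) :=
    funext fun z => gradient_comp_clm A (hf (A z))
  rw [hgrad]
  exact (A.adjoint.hasFDerivAt.comp x (hf'.hasFDerivAt.comp x A.hasFDerivAt)).fderiv

lemma gradient_comp_clm_sub (A : E →L[ℝ] G) {f g : G → ℝ} {x : E}
    (hf : DifferentiableAt ℝ f (A x)) (hg : DifferentiableAt ℝ g (A x)) :
    gradient (fun z => f (A z)) x - gradient (fun z => g (A z)) x =
      A.adjoint (gradient f (A x) - gradient g (A x)) := by
  rw [gradient_comp_clm A hf, gradient_comp_clm A hg, map_sub]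

lemma norm_fderiv_gradient_comp_clm_sub_le (A : E →L[ℝ] G) {f g : G → ℝ}
    (hf : ContDiff ℝ 2 f) (hg : ContDiff ℝ 2 g) (x : E) :
    ‖fderiv ℝ (gradient fun z => f (A z)) x - fderiv ℝ (gradient fun z => g (A z)) x‖ ≤
      ‖A‖ * ‖A‖ * ‖fderiv ℝ (gradient f) (A x) - fderiv ℝ (gradient g) (A x)‖ := by
  have differentiable_gradient {h : G → ℝ} (hh : ContDiff ℝ 2 h) :
      Differentiable ℝ (gradient h) :=
    (contDiff_gradient hh one_add_one_eq_two.le).differentiable one_ne_zero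
  rw [fderiv_gradient_comp_clm A (hf.differentiable two_ne_zero) (differentiable_gradient hf _),
    fderiv_gradient_comp_clm A (hg.differentiable two_ne_zero) (differentiable_gradient hg _),
    ← ContinuousLinearMap.comp_sub, ← ContinuousLinearMap.sub_comp]
  set Z := fderiv ℝ (gradient f) (A x) - fderiv ℝ (gradient g) (A x)
  calc ‖A.adjoint ∘L Z ∘L A‖ ≤ ‖A.adjoint‖ * ‖Z ∘L A‖ := ContinuousLinearMap.opNorm_comp_le _ _
    _ ≤ ‖A.adjoint‖ * (‖Z‖ * ‖A‖) := by gcongr; exact ContinuousLinearMap.opNorm_comp_le _ _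
    _ = ‖A‖ * ‖A‖ * ‖Z‖ := by rw [LinearIsometryEquiv.norm_map]; ring

end Gradient

section C2Density

/-- Density in `C²(E)` with respect to uniform convergence on compact sets of the function, its
gradient and its Hessian. -/
def DenseInC2 {E : Type*} [NormedAddCommGroup E] [InnerProductSpace ℝ E] [CompleteSpace E]
    (S : Set (E → ℝ)) : Prop :=
  ∀ g : E → ℝ, ContDiff ℝ 2 g → ∀ K : Set E, IsCompact K → ∀ ε > 0,
    ∃ f ∈ S,
      (∀ y ∈ K, |g y - f y| < ε) ∧
      (∀ y ∈ K, ‖gradient g y - gradient f y‖ < ε) ∧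
      (∀ y ∈ K, ‖fderiv ℝ (gradient g) y - fderiv ℝ (gradient f) y‖ < ε)

variable {E G V : Type*} [NormedAddCommGroup E] [InnerProductSpace ℝ E] [CompleteSpace E]
  [NormedAddCommGroup G] [InnerProductSpace ℝ G] [FiniteDimensional ℝ G]
  [NormedAddCommGroup V] [NormedSpace ℝ V]

lemma DenseInC2.exists_comp_clm_approx [CompleteSpace G] {S : Set (G → ℝ)} (hS : DenseInC2 S)
    (hSsmooth : ∀ f ∈ S, ContDiff ℝ 2 f) (A : E →L[ℝ] G) (L : E →ₗ[ℝ] V) {g : G → ℝ}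
    (hg : ContDiff ℝ 2 g) {K : Set E} (hK : IsCompact K) {ε : ℝ} (hε : 0 < ε) :
    ∃ f ∈ S, ∀ x ∈ K,
      |g (A x) - f (A x)| ≤ ε ∧
      ‖gradient (fun z => g (A z)) x - gradient (fun z => f (A z)) x‖ ≤ ε ∧
      ‖fderiv ℝ (gradient fun z => g (A z)) x - fderiv ℝ (gradient fun z => f (A z)) x‖ ≤ ε ∧
      ‖L (gradient (fun z => g (A z)) x - gradient (fun z => f (A z)) x)‖ ≤ ε := by
  let LA : G →L[ℝ] V := LinearMap.toContinuousLinearMap (L ∘ₗ A.adjoint.toLinearMap)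
  obtain ⟨t, ht, htε⟩ := exists_pos_mul_lt hε (1 + ‖A‖ + ‖A‖ * ‖A‖ + ‖LA‖)
  have scale {c : ℝ} (hc : c ≤ 1 + ‖A‖ + ‖A‖ * ‖A‖ + ‖LA‖) : c * t ≤ ε :=
    (mul_le_mul_of_nonneg_right hc ht.le).trans htε.le
  have hA : 0 ≤ ‖A‖ := norm_nonneg A
  have hAA : 0 ≤ ‖A‖ * ‖A‖ := mul_nonneg hA hA
  have hLA : 0 ≤ ‖LA‖ := norm_nonneg LA
  obtain ⟨f, hfS, hval, hgrad, hhess⟩ := hS g hg (A '' K) (hK.image A.continuous) t ht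
  have hf := hSsmooth f hfS
  refine ⟨f, hfS, fun x hx => ?_⟩
  have hAx := Set.mem_image_of_mem A hx
  have hgradDiff := gradient_comp_clm_sub A (hg.differentiable two_ne_zero (A x))
    (hf.differentiable two_ne_zero (A x))
  refine ⟨?_, ?_, ?_, ?_⟩
  · exact (hval _ hAx).le.trans (by simpa using scale (c := 1) (by linarith))
  · rw [hgradDiff]
    exact (A.adjoint.le_opNorm_of_le (hgrad _ hAx).le).trans
      (scale (by rw [LinearIsometryEquiv.norm_map]; linarith))
  · exact (norm_fderiv_gradient_comp_clm_sub_le A hg hf x).trans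
      ((mul_le_mul_of_nonneg_left (hhess _ hAx).le hAA).trans (scale (by linarith)))
  · rw [hgradDiff]
    exact (LA.le_opNorm_of_le (hgrad _ hAx).le).trans (scale (by linarith))

end C2Density

section StrongSequentialContinuity

variable {H : Type*} [NormedAddCommGroup H] [NormedSpace ℝ H]

/-- Joint sequential continuity of a second-order nonlinearity `F(x, r, p, Y)` with respect to the
strong operator topology in the Hessian variable `Y`. -/
def StronglySeqContinuous (F : H → ℝ → H → (H →L[ℝ] H) → ℝ) : Prop :=
  ∀ (xn : ℕ → H) (x : H) (rn : ℕ → ℝ) (r : ℝ) (pn : ℕ → H) (p : H)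
    (Yn : ℕ → H →L[ℝ] H) (Y : H →L[ℝ] H),
    Tendsto xn atTop (𝓝 x) → Tendsto rn atTop (𝓝 r) → Tendsto pn atTop (𝓝 p) →
    (∀ h : H, Tendsto (fun n => Yn n h) atTop (𝓝 (Y h))) →
    Tendsto (fun n => F (xn n) (rn n) (pn n) (Yn n)) atTop (𝓝 (F x r p Y))

lemma StronglySeqContinuous.tendsto {ι : Type*} {l : Filter ι}
    [l.IsCountablyGenerated] {F : H → ℝ → H → (H →L[ℝ] H) → ℝ} (hF : StronglySeqContinuous F)
    {x' : ι → H} {r' : ι → ℝ} {p' : ι → H} {Y' : ι → H →L[ℝ] H}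
    {x : H} {r : ℝ} {p : H} {Y : H →L[ℝ] H}
    (hx : Tendsto x' l (𝓝 x)) (hr : Tendsto r' l (𝓝 r)) (hp : Tendsto p' l (𝓝 p))
    (hY : ∀ h, Tendsto (fun i => Y' i h) l (𝓝 (Y h))) :
    Tendsto (fun i => F (x' i) (r' i) (p' i) (Y' i)) l (𝓝 (F x r p Y)) :=
  tendsto_of_seq_tendsto fun _ hs => hF _ _ _ _ _ _ _ _ (hx.comp hs) (hr.comp hs) (hp.comp hs)
    fun h => (hY h).comp hs

end StrongSequentialContinuity

section C2Convergence

variable {H ι : Type*} [NormedAddCommGroup H] [InnerProductSpace ℝ H] [CompleteSpace H]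
  {l : Filter ι} {u w : ι → H → ℝ} {v : H → ℝ} {K : Set H}

/-- Convergence of values and gradients uniformly on `K`, and of the Hessians in the strong
operator topology: `D²w_i(x) h → D²v(x) h` uniformly for `x ∈ K` and `h` in any compact set. -/
structure TendstoC2On (w : ι → H → ℝ) (v : H → ℝ) (l : Filter ι) (K : Set H) : Prop where
  value : TendstoUniformlyOn w v l K
  grad : TendstoUniformlyOn (fun i => gradient (w i)) (gradient v) l K
  hess : ∀ K' : Set H, IsCompact K' →
    TendstoUniformlyOn (fun i (q : H × H) => fderiv ℝ (gradient (w i)) q.1 q.2)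
      (fun q => fderiv ℝ (gradient v) q.1 q.2) l (K ×ˢ K')

lemma tendstoC2On_comp_clm {T : ι → H →L[ℝ] H} {C : ℝ} (hC : ∀ i, ‖T i‖ ≤ C)
    (hT : ∀ x, Tendsto (fun i => T i x) l (𝓝 x))
    (hT' : ∀ x, Tendsto (fun i => (T i).adjoint x) l (𝓝 x))
    (hv : ContDiff ℝ 2 v) (hK : IsCompact K) :
    TendstoC2On (fun i x => v (T i x)) v l K := by
  have hgrad : ContDiff ℝ 1 (gradient v) := contDiff_gradient hv one_add_one_eq_two.le
  have hhess := hgrad.continuous_fderiv_apply one_ne_zero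
  have hC' : ∀ i, ‖(T i).adjoint‖ ≤ C := fun i => by simpa using hC i
  have apply_tendsto {X : Type _} {m : Filter X} {y : X → H} {x : H} (hy : Tendsto y m (𝓝 x)) :
      Tendsto (fun p : ι × X => T p.1 (y p.2)) (l ×ˢ m) (𝓝 x) :=
    tendsto_clm_apply_of_norm_le (fun p => hC p.1) ((hT x).comp tendsto_fst)
      (hy.comp tendsto_snd)
  have adjoint_tendsto {X : Type _} {m : Filter X} {y : ι × X → H} {x : H}
      (hy : Tendsto y (l ×ˢ m) (𝓝 x)) :
      Tendsto (fun p => (T p.1).adjoint (y p)) (l ×ˢ m) (𝓝 x) :=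
    tendsto_clm_apply_of_norm_le (fun p => hC' p.1) ((hT' x).comp tendsto_fst) hy
  have id_tendsto (x : H) : Tendsto id (𝓝[K] x) (𝓝 x) := nhdsWithin_le_nhds
  refine ⟨?_, ?_, fun K' hK' => ?_⟩
  · refine tendstoUniformlyOn_of_tendsto_prod_nhdsWithin hK hv.continuous.continuousOn
      fun x _ => ?_
    exact (hv.continuous.tendsto x).comp (apply_tendsto (id_tendsto x))
  · refine tendstoUniformlyOn_of_tendsto_prod_nhdsWithin hK hgrad.continuous.continuousOn
      fun x _ => ?_
    simp only [gradient_comp_clm _ (hv.differentiable two_ne_zero _)]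
    exact adjoint_tendsto ((hgrad.continuous.tendsto x).comp (apply_tendsto (id_tendsto x)))
  · refine tendstoUniformlyOn_of_tendsto_prod_nhdsWithin (hK.prod hK') hhess.continuousOn
      fun q _ => ?_
    simp only [fderiv_gradient_comp_clm _ (hv.differentiable two_ne_zero)
      (hgrad.differentiable one_ne_zero _), ContinuousLinearMap.comp_apply]
    have hq : Tendsto id (𝓝[K ×ˢ K'] q) (𝓝 q) := nhdsWithin_le_nhds
    exact adjoint_tendsto ((hhess.tendsto q).comp
      ((apply_tendsto hq.fst_nhds).prodMk_nhds (apply_tendsto hq.snd_nhds)))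

lemma TendstoC2On.of_norm_sub_le (hu : TendstoC2On u v l K) {b : ι → ℝ}
    (hb : Tendsto b l (𝓝 0)) (hval : ∀ i, ∀ x ∈ K, |u i x - w i x| ≤ b i)
    (hgrad : ∀ i, ∀ x ∈ K, ‖gradient (u i) x - gradient (w i) x‖ ≤ b i)
    (hhess : ∀ i, ∀ x ∈ K,
      ‖fderiv ℝ (gradient (u i)) x - fderiv ℝ (gradient (w i)) x‖ ≤ b i) :
    TendstoC2On w v l K where
  value := tendstoUniformlyOn_of_dist_le hu.value hb hval
  grad := tendstoUniformlyOn_of_dist_le hu.grad hb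
    (by simpa only [dist_eq_norm] using hgrad)
  hess K' hK' := by
    obtain ⟨R, hR⟩ := hK'.isBounded.exists_norm_le
    refine tendstoUniformlyOn_of_dist_le (b := fun i => b i * R) (hu.hess K' hK')
      (by simpa using hb.mul_const R) fun i q hq => ?_
    rw [dist_eq_norm, ← sub_apply]
    exact ContinuousLinearMap.le_of_opNorm_le_of_le _ (hhess i q.1 hq.1) (hR q.2 hq.2)

lemma TendstoC2On.tendstoUniformlyOn_nonlinearity [l.IsCountablyGenerated]
    (hw : TendstoC2On w v l K) {F : H → ℝ → H → (H →L[ℝ] H) → ℝ} (hF : StronglySeqContinuous F)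
    (hv : ContDiff ℝ 2 v) (hK : IsCompact K) :
    TendstoUniformlyOn
      (fun i x => F x (w i x) (gradient (w i) x) (fderiv ℝ (gradient (w i)) x))
      (fun x => F x (v x) (gradient v x) (fderiv ℝ (gradient v) x)) l K := by
  have hgrad : ContDiff ℝ 1 (gradient v) := contDiff_gradient hv one_add_one_eq_two.le
  have hhess (h : H) : Continuous fun x => fderiv ℝ (gradient v) x h :=
    (hgrad.continuous_fderiv one_ne_zero).clm_apply continuous_const
  have hFv : Continuous fun x => F x (v x) (gradient v x) (fderiv ℝ (gradient v) x) :=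
    continuous_iff_continuousAt.2 fun x => hF.tendsto (x' := id) tendsto_id
      (hv.continuous.tendsto x) (hgrad.continuous.tendsto x) fun h => (hhess h).tendsto x
  have hwhess (h : H) : TendstoUniformlyOn (fun i x => fderiv ℝ (gradient (w i)) x h)
      (fun x => fderiv ℝ (gradient v) x h) l K :=
    ((hw.hess {h} isCompact_singleton).comp fun x => (x, h)).mono fun _ hx => ⟨hx, rfl⟩
  refine tendstoUniformlyOn_of_tendsto_prod_nhdsWithin hK hFv.continuousOn fun x _ => ?_
  have hx : Tendsto (fun p : ι × H => p.2) (l ×ˢ 𝓝[K] x) (𝓝 x) :=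
    tendsto_snd.mono_right nhdsWithin_le_nhds
  have lim_val := tendsto_prod_nhdsWithin_of_tendstoUniformlyOn hw.value
    (hv.continuous.continuousWithinAt (x := x))
  have lim_grad := tendsto_prod_nhdsWithin_of_tendstoUniformlyOn hw.grad
    (hgrad.continuous.continuousWithinAt (x := x))
  have lim_hess (h : H) := tendsto_prod_nhdsWithin_of_tendstoUniformlyOn (hwhess h)
    ((hhess h).continuousWithinAt (x := x))
  exact hF.tendsto hx lim_val lim_grad lim_hess

end C2Convergence

section Galerkin

variable {H : Type*} [NormedAddCommGroup H] [InnerProductSpace ℝ H]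

/-- `euclCoord e d` as a continuous linear map. -/
noncomputable def euclCoordL (e : ℕ → H) (d : ℕ) : H →L[ℝ] EuclideanSpace ℝ (Fin d) :=
  (PiLp.continuousLinearEquiv 2 ℝ fun _ : Fin d => ℝ).symm ∘L
    ContinuousLinearMap.pi fun i : Fin d => innerSL ℝ (e i)

lemma euclCoordL_apply (e : ℕ → H) (d : ℕ) (x : H) : euclCoordL e d x = euclCoord e d x := rfl

lemma norm_euclCoordL_le_one {e : ℕ → H} (he : Orthonormal ℝ e) (d : ℕ) :
    ‖euclCoordL e d‖ ≤ 1 := by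
  refine ContinuousLinearMap.opNorm_le_bound _ zero_le_one fun x => ?_
  rw [one_mul, ← sq_le_sq₀ (norm_nonneg _) (norm_nonneg _), EuclideanSpace.norm_sq_eq]
  exact (Finset.sum_range fun i => ‖⟪e i, x⟫‖ ^ 2).symm.trans_le (he.sum_inner_products_le x)

variable [CompleteSpace H]

/-- The Galerkin projection `x ↦ ∑ i < d, ⟪e i, x⟫ • e i`, encoded as `A† A` with `A` the
coordinate map, so that a function of the form `v ∘ galerkinProj e d` is visibly cylindrical. -/
noncomputable def galerkinProj (e : ℕ → H) (d : ℕ) : H →L[ℝ] H :=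
  (euclCoordL e d).adjoint ∘L euclCoordL e d

lemma galerkinProj_apply (e : ℕ → H) (d : ℕ) (x : H) :
    galerkinProj e d x = ∑ i ∈ Finset.range d, ⟪e i, x⟫ • e i := by
  refine ext_inner_left ℝ fun z => ?_
  rw [galerkinProj, ContinuousLinearMap.comp_apply, ContinuousLinearMap.adjoint_inner_right,
    inner_sum, Finset.sum_range, PiLp.inner_apply]
  exact Finset.sum_congr rfl fun i _ => by
    simp [euclCoordL_apply, euclCoord, inner_smul_right, real_inner_comm]

lemma adjoint_galerkinProj (e : ℕ → H) (d : ℕ) :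
    (galerkinProj e d).adjoint = galerkinProj e d := by
  rw [galerkinProj, ContinuousLinearMap.adjoint_comp, ContinuousLinearMap.adjoint_adjoint]

lemma norm_galerkinProj_le_one {e : ℕ → H} (he : Orthonormal ℝ e) (d : ℕ) :
    ‖galerkinProj e d‖ ≤ 1 := by
  rw [galerkinProj, ContinuousLinearMap.norm_adjoint_comp_self]
  exact mul_le_one₀ (norm_euclCoordL_le_one he d) (norm_nonneg _) (norm_euclCoordL_le_one he d)

lemma tendsto_galerkinProj {e : ℕ → H} (he : Orthonormal ℝ e)
    (htot : Dense (Submodule.span ℝ (Set.range e) : Set H)) (x : H) :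
    Tendsto (fun d => galerkinProj e d x) atTop (𝓝 x) := by
  let b := HilbertBasis.mk he (Submodule.dense_iff_topologicalClosure_eq_top.1 htot).ge
  simpa [b, HilbertBasis.repr_apply_apply, galerkinProj_apply]
    using (b.hasSum_repr x).tendsto_sum_nat

lemma tendstoC2On_comp_galerkinProj {e : ℕ → H} (he : Orthonormal ℝ e)
    (htot : Dense (Submodule.span ℝ (Set.range e) : Set H)) {v : H → ℝ} (hv : ContDiff ℝ 2 v)
    {K : Set H} (hK : IsCompact K) :
    TendstoC2On (fun d x => v (galerkinProj e d x)) v atTop K :=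
  tendstoC2On_comp_clm (norm_galerkinProj_le_one he) (tendsto_galerkinProj he htot)
    (by simpa only [adjoint_galerkinProj] using tendsto_galerkinProj he htot) hv hK

lemma exists_cyl_tendstoC2On {V : Type*} [NormedAddCommGroup V] [NormedSpace ℝ V] {e : ℕ → H}
    (he : Orthonormal ℝ e) (htot : Dense (Submodule.span ℝ (Set.range e) : Set H))
    {N : ∀ d : ℕ, Set (EuclideanSpace ℝ (Fin d) → ℝ)} (hN : ∀ d, DenseInC2 (N d))
    (hNsmooth : ∀ d, ∀ f ∈ N d, ContDiff ℝ 2 f) (L : H →ₗ[ℝ] V) {v : H → ℝ}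
    (hv : ContDiff ℝ 2 v) {K : Set H} (hK : IsCompact K) :
    ∃ (f : ∀ d, EuclideanSpace ℝ (Fin d) → ℝ) (b : ℕ → ℝ), (∀ d, f d ∈ N d) ∧
      TendstoC2On (fun d => cyl e (f d)) v atTop K ∧ Tendsto b atTop (𝓝 0) ∧
      ∀ d, ∀ x ∈ K, ‖L (galerkinProj e d (gradient v (galerkinProj e d x)) -
        gradient (cyl e (f d)) x)‖ ≤ b d := by
  choose f hfN hf using fun d : ℕ =>
    (hN d).exists_comp_clm_approx (hNsmooth d) (euclCoordL e d) L
      (hv.comp (euclCoordL e d).adjoint.contDiff) hK (Nat.one_div_pos_of_nat (α := ℝ) (n := d))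
  have hb : Tendsto (fun d : ℕ => 1 / ((d : ℝ) + 1)) atTop (𝓝 0) :=
    tendsto_one_div_add_atTop_nhds_zero_nat
  refine ⟨f, _, hfN, (tendstoC2On_comp_galerkinProj he htot hv hK).of_norm_sub_le hb
    (fun d x hx => (hf d x hx).1) (fun d x hx => (hf d x hx).2.1)
    (fun d x hx => (hf d x hx).2.2.1), hb, fun d x hx => ?_⟩
  have hgrad : gradient (fun z => v (galerkinProj e d z)) x =
      galerkinProj e d (gradient v (galerkinProj e d x)) := by
    rw [gradient_comp_clm _ (hv.differentiable two_ne_zero _), adjoint_galerkinProj]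
  rw [← hgrad]
  exact (hf d x hx).2.2.2

end Galerkin

section Residual

variable {H : Type*} [NormedAddCommGroup H] [InnerProductSpace ℝ H]

lemma tendstoUniformlyOn_inner_of_norm_sub_le {ι : Type*} {l : Filter ι} {y z : ι → H → H}
    {y₀ : H → H} {K : Set H} {b : ι → ℝ} (hK : Bornology.IsBounded K)
    (hy : TendstoUniformlyOn (fun i x => ⟪y i x, x⟫) (fun x => ⟪y₀ x, x⟫) l K)
    (hb : Tendsto b l (𝓝 0)) (hyz : ∀ i, ∀ x ∈ K, ‖y i x - z i x‖ ≤ b i) :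
    TendstoUniformlyOn (fun i x => ⟪z i x, x⟫) (fun x => ⟪y₀ x, x⟫) l K := by
  obtain ⟨R, hR⟩ := hK.exists_norm_le
  refine tendstoUniformlyOn_of_dist_le (b := fun i => b i * R) hy
    (by simpa using hb.mul_const R) fun i x hx => ?_
  calc dist ⟪y i x, x⟫ ⟪z i x, x⟫ = |⟪y i x - z i x, x⟫| := by
        rw [Real.dist_eq, ← inner_sub_left]
    _ ≤ ‖y i x - z i x‖ * ‖x‖ := abs_real_inner_le_norm _ _
    _ ≤ b i * R := by
        gcongr
        · exact (norm_nonneg _).trans (hyz i x hx)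
        · exact hyz i x hx
        · exact hR x hx

variable [CompleteSpace H]

/-- The left-hand side `⟪L Dw(x), x⟫ + F(x, w(x), Dw(x), D²w(x))` of the PDE. -/
noncomputable def pdeResidual (L : H →ₗ[ℝ] H) (F : H → ℝ → H → (H →L[ℝ] H) → ℝ) (w : H → ℝ)
    (x : H) : ℝ :=
  ⟪L (gradient w x), x⟫ + F x (w x) (gradient w x) (fderiv ℝ (gradient w) x)

end Residual

theorem hgno_solves_pde_on_compacts_general
    {H : Type*} [NormedAddCommGroup H] [InnerProductSpace ℝ H] [CompleteSpace H]
    {e : ℕ → H} (he : Orthonormal ℝ e)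
    (htot : Dense (Submodule.span ℝ (Set.range e) : Set H))
    {P : ℕ → H → H} (hP : ∀ d x, P d x = ∑ i ∈ Finset.range d, ⟪e i, x⟫ • e i)
    {N : ∀ d : ℕ, Set (EuclideanSpace ℝ (Fin d) → ℝ)}
    (hNsmooth : ∀ d, ∀ f ∈ N d, ContDiff ℝ 2 f) (hNdense : ∀ d, DenseInC2 (N d))
    (L : H →ₗ[ℝ] H) {F : H → ℝ → H → (H →L[ℝ] H) → ℝ} (hF : StronglySeqContinuous F)
    {v : H → ℝ} (hv : ContDiff ℝ 2 v) {K K' : Set H} (hK : IsCompact K) (hK' : IsCompact K')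
    (hcons : ∀ ε > 0, ∃ D : ℕ, ∀ d ≥ D, ∀ x ∈ K,
      |⟪L (gradient v x - P d (gradient v (P d x))), x⟫| < ε)
    {ε : ℝ} (hε : 0 < ε) :
    ∃ (d : ℕ) (f : EuclideanSpace ℝ (Fin d) → ℝ), f ∈ N d ∧
      (∀ x ∈ K, |v x - cyl e f x| < ε) ∧
      (∀ x ∈ K, ‖gradient v x - gradient (cyl e f) x‖ < ε) ∧
      (∀ x ∈ K, ∀ h ∈ K',
        ‖fderiv ℝ (gradient v) x h - fderiv ℝ (gradient (cyl e f)) x h‖ < ε) ∧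
      (∀ x ∈ K, |⟪L (gradient v x - gradient (cyl e f) x), x⟫| < ε) ∧
      (∀ x ∈ K, |pdeResidual L F (cyl e f) x - pdeResidual L F v x| < ε) := by
  obtain rfl : P = fun d x => galerkinProj e d x := by
    ext d x
    rw [hP, galerkinProj_apply]
  obtain ⟨f, b, hfN, hC2, hb, hLb⟩ := exists_cyl_tendstoC2On he htot hNdense hNsmooth L hv hK
  have hgalerkin : TendstoUniformlyOn
      (fun d x => ⟪L (galerkinProj e d (gradient v (galerkinProj e d x))), x⟫)
      (fun x => ⟪L (gradient v x), x⟫) atTop K := by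
    simpa only [Metric.tendstoUniformlyOn_iff, eventually_atTop, Real.dist_eq, ← inner_sub_left,
      ← map_sub] using hcons
  have hdrift : TendstoUniformlyOn (fun d x => ⟪L (gradient (cyl e (f d)) x), x⟫)
      (fun x => ⟪L (gradient v x), x⟫) atTop K :=
    tendstoUniformlyOn_inner_of_norm_sub_le hK.isBounded hgalerkin hb
      (by simpa only [map_sub] using hLb)
  have hres : TendstoUniformlyOn (fun d => pdeResidual L F (cyl e (f d))) (pdeResidual L F v)
      atTop K := hdrift.add (hC2.tendstoUniformlyOn_nonlinearity hF hv hK)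
  have hhess := hC2.hess K' hK'
  have hval := hC2.value
  have hgrad := hC2.grad
  rw [Metric.tendstoUniformlyOn_iff] at hval hgrad hhess hdrift hres
  obtain ⟨d, hval, hgrad, hhess, hdrift, hres⟩ := ((hval ε hε).and ((hgrad ε hε).and
    ((hhess ε hε).and ((hdrift ε hε).and (hres ε hε))))).exists
  refine ⟨d, f d, hfN d, hval, ?_, ?_, ?_, ?_⟩
  · simpa only [dist_eq_norm] using hgrad
  · exact fun x hx h hh => by simpa only [dist_eq_norm] using hhess (x, h) ⟨hx, hh⟩
  · simpa only [Real.dist_eq, map_sub, inner_sub_left] using hdrift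
  · simpa only [Real.dist_eq, abs_sub_comm] using hres

/-- HGNOs approximately solve the PDE
`⟪L Dv(x), x⟫ + F(x, v(x), Dv(x), D²v(x)) = 0` uniformly on compacts
(Theorem DGM_residual(i)). -/
theorem hgno_solves_pde_on_compacts
    {H : Type*} [NormedAddCommGroup H] [InnerProductSpace ℝ H] [CompleteSpace H]
    (e : ℕ → H) (he : Orthonormal ℝ e)
    (htot : Dense ((Submodule.span ℝ (Set.range e) : Submodule ℝ H) : Set H))
    (P : ℕ → H → H)
    (hP : ∀ (d : ℕ) (x : H), P d x = ∑ i ∈ Finset.range d, ⟪e i, x⟫ • e i)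
    (N : ∀ d : ℕ, Set (EuclideanSpace ℝ (Fin d) → ℝ))
    (hNsmooth : ∀ d : ℕ, ∀ f ∈ N d, ContDiff ℝ 2 f)
    (hNdense : ∀ (d : ℕ) (h : EuclideanSpace ℝ (Fin d) → ℝ), ContDiff ℝ 2 h →
      ∀ K : Set (EuclideanSpace ℝ (Fin d)), IsCompact K → ∀ ε > 0,
      ∃ f ∈ N d,
        (∀ y ∈ K, |h y - f y| < ε) ∧
        (∀ y ∈ K, ‖gradient h y - gradient f y‖ < ε) ∧
        (∀ y ∈ K, ‖fderiv ℝ (gradient h) y - fderiv ℝ (gradient f) y‖ < ε))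
    (L : H →ₗ[ℝ] H) (Ldom : Submodule ℝ H)
    (hLdense : Dense (Ldom : Set H))
    (hLclosed : IsClosed {p : H × H | p.1 ∈ Ldom ∧ p.2 = L p.1})
    (heL : ∀ i : ℕ, e i ∈ Ldom)
    (F : H → ℝ → H → (H →L[ℝ] H) → ℝ)
    (hFcont : Continuous fun w : H × ℝ × H × (H →L[ℝ] H) => F w.1 w.2.1 w.2.2.1 w.2.2.2)
    (C k : ℝ) (hC : 0 < C) (hk : 0 ≤ k)
    (hLip : ∀ (x : H) (r s : ℝ) (p q : H) (Z Y : H →L[ℝ] H),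
      |F x r p Z - F x s q Y| ≤ C * (|r - s| + ‖p - q‖ + ‖Z - Y‖) * (1 + ‖x‖ ^ k))
    (hFseq : ∀ (xn : ℕ → H) (x : H) (rn : ℕ → ℝ) (r : ℝ) (pn : ℕ → H) (p : H)
        (Yn : ℕ → H →L[ℝ] H) (Y : H →L[ℝ] H),
        Tendsto xn atTop (𝓝 x) → Tendsto rn atTop (𝓝 r) → Tendsto pn atTop (𝓝 p) →
        (∀ h : H, Tendsto (fun n => Yn n h) atTop (𝓝 (Y h))) →
        Tendsto (fun n => F (xn n) (rn n) (pn n) (Yn n)) atTop (𝓝 (F x r p Y)))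
    (v : H → ℝ) (hv : ContDiff ℝ 2 v)
    (hDvdom : ∀ x : H, gradient v x ∈ Ldom)
    (hLDv : Continuous fun x : H => L (gradient v x))
    (hPDE : ∀ x : H,
      ⟪L (gradient v x), x⟫ + F x (v x) (gradient v x) (fderiv ℝ (gradient v) x) = 0)
    (K K' : Set H) (hK : IsCompact K) (hK' : IsCompact K')
    (hcons : ∀ ε > 0, ∃ D : ℕ, ∀ d ≥ D, ∀ x ∈ K,
      |⟪L (gradient v x - P d (gradient v (P d x))), x⟫| < ε)
    (ε : ℝ) (hε : 0 < ε) :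
    ∃ (d : ℕ) (f : EuclideanSpace ℝ (Fin d) → ℝ), f ∈ N d ∧
      (∀ x ∈ K, |v x - cyl e f x| < ε) ∧
      (∀ x ∈ K, ‖gradient v x - gradient (cyl e f) x‖ < ε) ∧
      (∀ x ∈ K, ∀ h ∈ K',
        ‖fderiv ℝ (gradient v) x h - fderiv ℝ (gradient (cyl e f)) x h‖ < ε) ∧
      (∀ x ∈ K, |⟪L (gradient v x - gradient (cyl e f) x), x⟫| < ε) ∧
      (∀ x ∈ K,
        |⟪L (gradient (cyl e f) x), x⟫ +
          F x (cyl e f x) (gradient (cyl e f) x) (fderiv ℝ (gradient (cyl e f)) x)| < ε) := by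
  simpa only [pdeResidual, hPDE, sub_zero] using
    hgno_solves_pde_on_compacts_general he htot hP hNsmooth hNdense L hFseq hv hK hK' hcons hε
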